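/- Reification yields reduction: if H implies H' and r is a reification from H to H', then the homomorphic extension of r to CKA terms is a reduction from H to H'. -/

import Mathlib

namespace CKAH

open Classical

/-! ### Labelled posets and pomsets -/

/-- A labelled poset over alphabet `A`: a finite carrier with a partial order and labelling. -/
structure LPoset (A : Type) : Type 1 where
  carrier : Type
  [fin : Fintype carrier]
  [ord : PartialOrder carrier]
  lab : carrier → A

attribute [instance] LPoset.fin LPoset.ord

/-- Isomorphism of labelled posets: an order isomorphism preserving labels. -/
def LPoset.Iso {A : Type} (u v : LPoset A) : Prop :=
  ∃ e : u.carrier ≃o v.carrier, ∀ x, v.lab (e x) = u.lab x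

theorem LPoset.iso_equivalence (A : Type) : Equivalence (LPoset.Iso (A := A)) where
  refl u := ⟨OrderIso.refl _, fun _ => rfl⟩
  symm := by
    rintro u v ⟨e, he⟩
    exact ⟨e.symm, fun x => by rw [← he (e.symm x), OrderIso.apply_symm_apply]⟩
  trans := by
    rintro u v w ⟨e, he⟩ ⟨f, hf⟩
    exact ⟨e.trans f, fun x => by rw [OrderIso.trans_apply, hf, he]⟩

instance pomSetoid (A : Type) : Setoid (LPoset A) := ⟨LPoset.Iso, LPoset.iso_equivalence A⟩

/-- A pomset is an isomorphism class of labelled posets. -/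
def Pomset (A : Type) : Type 1 := Quotient (pomSetoid A)

/-- Sequential composition of labelled posets: disjoint union, everything on the left
below everything on the right (lexicographic sum order). -/
def LPoset.seqL {A : Type} (u v : LPoset A) : LPoset A where
  carrier := u.carrier ⊕ₗ v.carrier
  fin := inferInstanceAs (Fintype (u.carrier ⊕ v.carrier))
  lab := fun x => Sum.elim u.lab v.lab (ofLex x)

/-- Parallel composition of labelled posets: disjoint union with no cross ordering. -/
def LPoset.parL {A : Type} (u v : LPoset A) : LPoset A where
  carrier := u.carrier ⊕ v.carrier
  lab := Sum.elim u.lab v.lab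

def Pomset.seq {A : Type} : Pomset A → Pomset A → Pomset A :=
  Quotient.map₂ LPoset.seqL (by
    rintro u₁ u₂ ⟨e, he⟩ v₁ v₂ ⟨f, hf⟩
    refine ⟨(RelIso.sumLexCongr e f :
      (u₁.carrier ⊕ₗ v₁.carrier) ≃o (u₂.carrier ⊕ₗ v₂.carrier)), ?_⟩
    rintro (x | x)
    · exact he x
    · exact hf x)

/-- Order isomorphism between disjoint-union orders, from component isomorphisms. -/
def sumOrderIso {α β γ δ : Type} [PartialOrder α] [PartialOrder β] [PartialOrder γ]
    [PartialOrder δ] (e : α ≃o γ) (f : β ≃o δ) : (α ⊕ β) ≃o (γ ⊕ δ) where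
  toEquiv := Equiv.sumCongr e.toEquiv f.toEquiv
  map_rel_iff' := by
    rintro (x | x) (y | y) <;> simp [Sum.le_def, e.le_iff_le, f.le_iff_le]

def Pomset.par {A : Type} : Pomset A → Pomset A → Pomset A :=
  Quotient.map₂ LPoset.parL (by
    rintro u₁ u₂ ⟨e, he⟩ v₁ v₂ ⟨f, hf⟩
    refine ⟨sumOrderIso e f, ?_⟩
    rintro (x | x)
    · exact he x
    · exact hf x)

def LPoset.emptyL (A : Type) : LPoset A := { carrier := Fin 0, lab := fun x => x.elim0 }

def LPoset.singleL {A : Type} (a : A) : LPoset A := { carrier := PUnit, lab := fun _ => a }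

/-- The empty pomset `1`. -/
def Pomset.empty (A : Type) : Pomset A := ⟦LPoset.emptyL A⟧

/-- The single-letter pomset. -/
def Pomset.single {A : Type} (a : A) : Pomset A := ⟦LPoset.singleL a⟧

/-- Subsumption on labelled posets: `u ⊑ v` iff there is a label-preserving
order-preserving bijection from the carrier of `v` to that of `u`. -/
def LPoset.subL {A : Type} (u v : LPoset A) : Prop :=
  ∃ h : v.carrier ≃ u.carrier,
    (∀ x, u.lab (h x) = v.lab x) ∧ ∀ x y : v.carrier, x ≤ y → h x ≤ h y

/-- Subsumption of pomsets: `Pomset.sub U V` means `U ⊑ V`. -/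
def Pomset.sub {A : Type} : Pomset A → Pomset A → Prop :=
  Quotient.lift₂ LPoset.subL (by
    rintro u₁ v₁ u₂ v₂ ⟨e, he⟩ ⟨f, hf⟩
    refine propext ⟨?_, ?_⟩
    · rintro ⟨h, hl, hm⟩
      refine ⟨(f.toEquiv.symm.trans h).trans e.toEquiv, fun x => ?_, fun x y hxy => ?_⟩
      · show u₂.lab (e (h (f.symm x))) = v₂.lab x
        rw [he, hl, ← hf (f.symm x), OrderIso.apply_symm_apply]
      · simp only [Equiv.trans_apply]
        exact e.le_iff_le.mpr (hm _ _ (f.symm.le_iff_le.mpr hxy))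
    · rintro ⟨h, hl, hm⟩
      refine ⟨(f.toEquiv.trans h).trans e.toEquiv.symm, fun x => ?_, fun x y hxy => ?_⟩
      · show u₁.lab (e.symm (h (f x))) = v₁.lab x
        rw [← he (e.symm (h (f x))), OrderIso.apply_symm_apply, hl, hf]
      · simp only [Equiv.trans_apply]
        exact e.symm.le_iff_le.mpr (hm _ _ (f.le_iff_le.mpr hxy)))

def LPoset.isWordL {A : Type} (u : LPoset A) : Prop := ∀ x y : u.carrier, x ≤ y ∨ y ≤ x

/-- A pomset is a word when it is totally ordered. -/
def Pomset.IsWord {A : Type} : Pomset A → Prop :=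
  Quotient.lift LPoset.isWordL (by
    rintro u v ⟨e, -⟩
    refine propext ⟨fun h x y => ?_, fun h x y => ?_⟩
    · rcases h (e.symm x) (e.symm y) with h' | h'
      · exact Or.inl (e.symm.le_iff_le.mp h')
      · exact Or.inr (e.symm.le_iff_le.mp h')
    · rcases h (e x) (e y) with h' | h'
      · exact Or.inl (e.le_iff_le.mp h')
      · exact Or.inr (e.le_iff_le.mp h'))

def LPoset.mapL {A B : Type} (f : A → B) (u : LPoset A) : LPoset B :=
  { carrier := u.carrier, lab := f ∘ u.lab }

/-- Relabelling of pomsets along a function on letters. -/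
def Pomset.map {A B : Type} (f : A → B) : Pomset A → Pomset B :=
  Quotient.map (LPoset.mapL f)
    (by rintro u v ⟨e, he⟩; exact ⟨e, fun x => congrArg f (he x)⟩)

def LPoset.overL {A : Type} (Γ : Set A) (u : LPoset A) : Prop := ∀ x, u.lab x ∈ Γ

/-- All labels of the pomset belong to `Γ`. -/
def Pomset.Over {A : Type} (Γ : Set A) : Pomset A → Prop :=
  Quotient.lift (LPoset.overL Γ) (by
    rintro u v ⟨e, he⟩
    refine propext ⟨fun h x => ?_, fun h x => ?_⟩
    · have h2 := he (e.symm x)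
      rw [OrderIso.apply_symm_apply] at h2
      rw [h2]; exact h _
    · rw [← he x]; exact h _)

/-- Series-parallel pomsets. -/
inductive Pomset.IsSP {A : Type} : Pomset A → Prop
  | empty : Pomset.IsSP (Pomset.empty A)
  | single (a : A) : Pomset.IsSP (Pomset.single a)
  | seq {U V : Pomset A} : Pomset.IsSP U → Pomset.IsSP V → Pomset.IsSP (Pomset.seq U V)
  | par {U V : Pomset A} : Pomset.IsSP U → Pomset.IsSP V → Pomset.IsSP (Pomset.par U V)

def SPset (A : Type) : Set (Pomset A) := {U | U.IsSP}

/-! ### Pomset contexts -/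

/-- Contexts are pomsets over `Option A`, where `none` plays the role of `*`.
`uniqueStarL` says there is exactly one `*`-labelled node. -/
def LPoset.uniqueStarL {A : Type} (c : LPoset (Option A)) : Prop := ∃! x, c.lab x = none

theorem LPoset.uniqueStarL_congr {A : Type} {u v : LPoset (Option A)}
    (e : u.carrier ≃o v.carrier) (he : ∀ x, v.lab (e x) = u.lab x) :
    u.uniqueStarL ↔ v.uniqueStarL := by
  constructor
  · rintro ⟨x, hx, hux⟩
    refine ⟨e x, show v.lab (e x) = none by rw [he]; exact hx, fun y hy => ?_⟩
    have h2 := he (e.symm y)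
    rw [OrderIso.apply_symm_apply] at h2
    have h3 : e.symm y = x := hux _ (h2.symm.trans hy)
    rw [← h3, OrderIso.apply_symm_apply]
  · rintro ⟨x, hx, hvx⟩
    refine ⟨e.symm x, ?_, fun y hy => ?_⟩
    · show u.lab (e.symm x) = none
      have h2 := he (e.symm x)
      rw [OrderIso.apply_symm_apply] at h2
      rw [← h2]; exact hx
    · have h3 : e y = x := hvx _ (show v.lab (e y) = none by rw [he]; exact hy)
      rw [← h3, OrderIso.symm_apply_apply]

/-- A pomset context: exactly one node labelled `*`. -/
def Pomset.IsCtx {A : Type} : Pomset (Option A) → Prop :=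
  Quotient.lift LPoset.uniqueStarL
    (fun _ _ h => propext (LPoset.uniqueStarL_congr h.choose h.choose_spec))

/-- Series-parallel pomset contexts. -/
def Pomset.IsSPCtx {A : Type} (C : Pomset (Option A)) : Prop := C.IsCtx ∧ C.IsSP

/-- Sequential (totally ordered) pomset contexts. -/
def Pomset.IsSeqCtx {A : Type} (C : Pomset (Option A)) : Prop := C.IsCtx ∧ C.IsWord

/-- The trivial context `*`. -/
def starCtx (A : Type) : Pomset (Option A) := Pomset.single (none : Option A)

theorem option_get_eq_get {α : Type} {o₁ o₂ : Option α} (h : o₁ = o₂) (h₁ : o₁.isSome)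
    (h₂ : o₂.isSome) : o₁.get h₁ = o₂.get h₂ := by subst h; rfl

/-- The order of `C[U]`: the orders of `C` (restricted away from `*`) and of `U`, with a
point of `C` below (resp. above) all of `U` when it is below (resp. above) the unique
`*`-node of `C`.  (For well-definedness of the order, the cross-relations are guarded by
the requirement that the star node is unique, which holds for every genuine context.) -/
def LPoset.insLe {A : Type} (c : LPoset (Option A)) (u : LPoset A) :
    ({x : c.carrier // c.lab x ≠ none} ⊕ u.carrier) →
    ({x : c.carrier // c.lab x ≠ none} ⊕ u.carrier) → Prop
  | Sum.inl x, Sum.inl y => x.val ≤ y.val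
  | Sum.inr x, Sum.inr y => x ≤ y
  | Sum.inl x, Sum.inr _ => c.uniqueStarL ∧ ∃ s, c.lab s = none ∧ x.val ≤ s
  | Sum.inr _, Sum.inl y => c.uniqueStarL ∧ ∃ s, c.lab s = none ∧ s ≤ y.val

/-- Insertion of a labelled poset `u` into the gap of a context `c`: the `*`-labelled
node is removed and `u` is put in its place, inheriting the order relations of `*`. -/
noncomputable def LPoset.insL {A : Type} (c : LPoset (Option A)) (u : LPoset A) :
    LPoset A where
  carrier := {x : c.carrier // c.lab x ≠ none} ⊕ u.carrier
  fin := by classical exact inferInstance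
  ord :=
    { le := LPoset.insLe c u
      lt := fun p q => LPoset.insLe c u p q ∧ ¬ LPoset.insLe c u q p
      lt_iff_le_not_ge := fun _ _ => Iff.rfl
      le_refl := by rintro (x | x) <;> exact le_refl _
      le_trans := by
        rintro (x | x) (y | y) (z | z) h1 h2
        · exact le_trans h1 h2
        · obtain ⟨hu, s, hs, hys⟩ := h2
          exact ⟨hu, s, hs, le_trans h1 hys⟩
        · obtain ⟨hu, s, hs, hxs⟩ := h1
          obtain ⟨-, t, ht, htz⟩ := h2
          obtain ⟨w, hw, huniq⟩ := hu
          have hst : s = t := (huniq s hs).trans (huniq t ht).symm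
          exact le_trans (hst ▸ hxs) htz
        · exact h1
        · obtain ⟨hu, s, hs, hsy⟩ := h1
          exact ⟨hu, s, hs, le_trans hsy h2⟩
        · obtain ⟨hu, s, hs, hsy⟩ := h1
          obtain ⟨-, t, ht, hyt⟩ := h2
          obtain ⟨w, hw, huniq⟩ := hu
          have hst : s = t := (huniq s hs).trans (huniq t ht).symm
          have hy : y.val = s := le_antisymm (hst.symm ▸ hyt) hsy
          exact absurd (hy.symm ▸ hs) y.prop
        · exact h2
        · exact le_trans h1 h2
      le_antisymm := by
        rintro (x | x) (y | y) h1 h2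
        · exact congrArg Sum.inl (Subtype.ext (le_antisymm h1 h2))
        · obtain ⟨hu, s, hs, hxs⟩ := h1
          obtain ⟨-, t, ht, htx⟩ := h2
          obtain ⟨w, hw, huniq⟩ := hu
          have hst : s = t := (huniq s hs).trans (huniq t ht).symm
          have hx : x.val = s := le_antisymm hxs (hst.symm ▸ htx)
          exact absurd (hx.symm ▸ hs) x.prop
        · obtain ⟨hu, s, hs, hsy⟩ := h1
          obtain ⟨-, t, ht, hyt⟩ := h2
          obtain ⟨w, hw, huniq⟩ := hu
          have hst : s = t := (huniq s hs).trans (huniq t ht).symm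
          have hy : y.val = s := le_antisymm (hst.symm ▸ hyt) hsy
          exact absurd (hy.symm ▸ hs) y.prop
        · exact congrArg Sum.inr (le_antisymm h1 h2) }
  lab := Sum.elim (fun x => (c.lab x.val).get (Option.isSome_iff_ne_none.mpr x.prop)) u.lab

/-- `Pomset.ins C U` is `C[U]`: plugging the pomset `U` into the gap of the context `C`. -/
noncomputable def Pomset.ins {A : Type} : Pomset (Option A) → Pomset A → Pomset A :=
  Quotient.map₂ LPoset.insL (by
    rintro c₁ c₂ ⟨e, he⟩ u₁ u₂ ⟨f, hf⟩
    have hstar : c₁.uniqueStarL ↔ c₂.uniqueStarL := LPoset.uniqueStarL_congr e he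
    refine ⟨{ toEquiv := Equiv.sumCongr
                (e.toEquiv.subtypeEquiv fun x => by
                  rw [show c₂.lab (e.toEquiv x) = c₁.lab x from he x]) f.toEquiv
              map_rel_iff' := ?_ }, ?_⟩
    · rintro (x | x) (y | y)
      · exact e.le_iff_le
      · show (c₂.uniqueStarL ∧ ∃ s, c₂.lab s = none ∧ (e x.val : c₂.carrier) ≤ s) ↔
             (c₁.uniqueStarL ∧ ∃ s, c₁.lab s = none ∧ x.val ≤ s)
        constructor
        · rintro ⟨hu, s, hs, hxs⟩
          refine ⟨hstar.mpr hu, e.symm s, ?_, ?_⟩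
          · have h2 := he (e.symm s)
            rw [OrderIso.apply_symm_apply] at h2
            rw [← h2]; exact hs
          · exact e.le_iff_le.mp (by rw [OrderIso.apply_symm_apply]; exact hxs)
        · rintro ⟨hu, s, hs, hxs⟩
          exact ⟨hstar.mp hu, e s, by rw [he]; exact hs, e.le_iff_le.mpr hxs⟩
      · show (c₂.uniqueStarL ∧ ∃ s, c₂.lab s = none ∧ s ≤ (e y.val : c₂.carrier)) ↔
             (c₁.uniqueStarL ∧ ∃ s, c₁.lab s = none ∧ s ≤ y.val)
        constructor
        · rintro ⟨hu, s, hs, hsy⟩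
          refine ⟨hstar.mpr hu, e.symm s, ?_, ?_⟩
          · have h2 := he (e.symm s)
            rw [OrderIso.apply_symm_apply] at h2
            rw [← h2]; exact hs
          · exact e.le_iff_le.mp (by rw [OrderIso.apply_symm_apply]; exact hsy)
        · rintro ⟨hu, s, hs, hsy⟩
          exact ⟨hstar.mp hu, e s, by rw [he]; exact hs, e.le_iff_le.mpr hsy⟩
      · exact f.le_iff_le
    · rintro (x | x)
      · exact option_get_eq_get (he x.val) _ _
      · exact hf x)

/-! ### Pomset languages -/

abbrev Lang (A : Type) := Set (Pomset A)

def Lang.seq {A : Type} (L K : Lang A) : Lang A :=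
  {W | ∃ U ∈ L, ∃ V ∈ K, W = Pomset.seq U V}

def Lang.par {A : Type} (L K : Lang A) : Lang A :=
  {W | ∃ U ∈ L, ∃ V ∈ K, W = Pomset.par U V}

def Lang.pow {A : Type} (L : Lang A) : ℕ → Lang A
  | 0 => {Pomset.empty A}
  | n + 1 => Lang.seq (Lang.pow L n) L

def Lang.star {A : Type} (L : Lang A) : Lang A := ⋃ n, L.pow n

/-- Application of a context to a language: `C[L] = {C[U] : U ∈ L}`. -/
def Ctx.img {A : Type} (C : Pomset (Option A)) (L : Lang A) : Lang A :=
  {W | ∃ U ∈ L, W = C.ins U}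

/-! ### CKA terms and semantics -/

inductive Term (A : Type) : Type
  | zero : Term A
  | one : Term A
  | var : A → Term A
  | add : Term A → Term A → Term A
  | seq : Term A → Term A → Term A
  | par : Term A → Term A → Term A
  | star : Term A → Term A

/-- Pomset language semantics of CKA terms. -/
def Term.lang {A : Type} : Term A → Lang A
  | .zero => ∅
  | .one => {Pomset.empty A}
  | .var a => {Pomset.single a}
  | .add e f => e.lang ∪ f.lang
  | .seq e f => Lang.seq e.lang f.lang
  | .par e f => Lang.par e.lang f.lang
  | .star e => Lang.star e.lang

/-- Sets of hypotheses: a hypothesis `e ≤ f` is the pair `(e, f)`. -/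
abbrev HypSet (A : Type) := Set (Term A × Term A)

/-- The congruence `≡^H` on CKA terms generated by the CKA axioms and the hypotheses `H`
(the constructor `hyp` encodes `e ≦^H f`, i.e. `e + f ≡^H f`, for `e ≤ f ∈ H`). -/
inductive CongH {A : Type} (H : HypSet A) : Term A → Term A → Prop
  | refl (e) : CongH H e e
  | symm {e f} : CongH H e f → CongH H f e
  | trans {e f g} : CongH H e f → CongH H f g → CongH H e g
  | addCong {e e' f f'} : CongH H e e' → CongH H f f' → CongH H (.add e f) (.add e' f')
  | seqCong {e e' f f'} : CongH H e e' → CongH H f f' → CongH H (.seq e f) (.seq e' f')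
  | parCong {e e' f f'} : CongH H e e' → CongH H f f' → CongH H (.par e f) (.par e' f')
  | starCong {e e'} : CongH H e e' → CongH H (.star e) (.star e')
  | addZero (e) : CongH H (.add e .zero) e
  | addIdem (e) : CongH H (.add e e) e
  | addComm (e f) : CongH H (.add e f) (.add f e)
  | addAssoc (e f g) : CongH H (.add e (.add f g)) (.add (.add e f) g)
  | seqAssoc (e f g) : CongH H (.seq e (.seq f g)) (.seq (.seq e f) g)
  | seqDistL (e f g) : CongH H (.seq e (.add f g)) (.add (.seq e f) (.seq e g))
  | seqDistR (e f g) : CongH H (.seq (.add e f) g) (.add (.seq e g) (.seq f g))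
  | seqOneR (e) : CongH H (.seq e .one) e
  | seqOneL (e) : CongH H (.seq .one e) e
  | seqZeroR (e) : CongH H (.seq e .zero) .zero
  | seqZeroL (e) : CongH H (.seq .zero e) .zero
  | parComm (e f) : CongH H (.par e f) (.par f e)
  | parOne (e) : CongH H (.par e .one) e
  | parZero (e) : CongH H (.par e .zero) .zero
  | parAssoc (e f g) : CongH H (.par e (.par f g)) (.par (.par e f) g)
  | parDist (e f g) : CongH H (.par e (.add f g)) (.add (.par e f) (.par e g))
  | starUnfoldL (e) : CongH H (.add .one (.seq e (.star e))) (.star e)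
  | starUnfoldR (e) : CongH H (.add .one (.seq (.star e) e)) (.star e)
  | lfpL {e f g} : CongH H (.add (.add e (.seq f g)) g) g →
      CongH H (.add (.seq (.star f) e) g) g
  | lfpR {e f g} : CongH H (.add (.add e (.seq f g)) f) f →
      CongH H (.add (.seq e (.star g)) f) f
  | hyp {e f} : (e, f) ∈ H → CongH H (.add e f) f

/-- `e ≦^H f`, the natural order `e + f ≡^H f`. -/
def LeH {A : Type} (H : HypSet A) (e f : Term A) : Prop := CongH H (.add e f) f

/-- The `H`-closure of a pomset language, as an inductive predicate: the smallest language
containing `L` such that for all `e ≤ f ∈ H` and series-parallel contexts `C`,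
if `C[⟦f⟧] ⊆ cl` then `C[⟦e⟧] ⊆ cl`. -/
inductive closure {A : Type} (H : HypSet A) (L : Lang A) : Pomset A → Prop
  | base {U} : U ∈ L → closure H L U
  | step {e f : Term A} (hef : (e, f) ∈ H) {C : Pomset (Option A)} (hC : C.IsSPCtx)
      (hf : ∀ V ∈ f.lang, closure H L (C.ins V)) {U} (hU : U ∈ e.lang) :
      closure H L (C.ins U)

/-- `cl H L` is the `H`-closure of `L`. -/
def cl {A : Type} (H : HypSet A) (L : Lang A) : Lang A := {U | closure H L U}

/-- The sequential closure: like `cl` but only sequential contexts are used. -/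
inductive seqClosure {A : Type} (H : HypSet A) (L : Lang A) : Pomset A → Prop
  | base {U} : U ∈ L → seqClosure H L U
  | step {e f : Term A} (hef : (e, f) ∈ H) {C : Pomset (Option A)} (hC : C.IsSeqCtx)
      (hf : ∀ V ∈ f.lang, seqClosure H L (C.ins V)) {U} (hU : U ∈ e.lang) :
      seqClosure H L (C.ins U)

def seqCl {A : Type} (H : HypSet A) (L : Lang A) : Lang A := {U | seqClosure H L U}

/-! ### Implication, completeness, reductions -/

/-- `H` implies `H'`: every hypothesis of `H'` is derivable from `H`. -/
def Implies {A : Type} (H H' : HypSet A) : Prop := ∀ p ∈ H', LeH H p.1 p.2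

/-- `H` is complete: semantic equivalence implies axiomatic equivalence. -/
def Complete {A : Type} (H : HypSet A) : Prop :=
  ∀ e f : Term A, cl H e.lang = cl H f.lang → CongH H e f

/-- A reduction from `H` to `H'` (presupposing that `H` implies `H'`). -/
structure IsReduction {A : Type} (H H' : HypSet A) (r : Term A → Term A) : Prop where
  implies : Implies H H'
  equiv : ∀ e, CongH H e (r e)
  reflect : ∀ e f : Term A, cl H e.lang = cl H f.lang → cl H' (r e).lang = cl H' (r f).lang

def Reduces {A : Type} (H H' : HypSet A) : Prop := ∃ r, IsReduction H H' r

/-- A strong reduction from `H` to `H'`. -/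
structure IsStrongReduction {A : Type} (H H' : HypSet A) (r : Term A → Term A)
    extends IsReduction H H' r : Prop where
  strong : ∀ e : Term A, cl H e.lang = cl H' (r e).lang

def StronglyReduces {A : Type} (H H' : HypSet A) : Prop := ∃ r, IsStrongReduction H H' r

/-- `H` factorises into `H₀` and `H₁`. -/
def Factorises {A : Type} (H H₀ H₁ : HypSet A) : Prop :=
  Implies H H₀ ∧ Implies H H₁ ∧ ∀ L : Lang A, L ⊆ SPset A → cl H L = cl H₁ (cl H₀ L)

/-! ### The exchange hypotheses and sp-subsumption -/

/-- The exchange hypotheses `(e∥f)·(g∥h) ≤ (e·g)∥(f·h)`. -/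
def exch (A : Type) : HypSet A :=
  {p | ∃ e f g h : Term A,
    p = (Term.seq (.par e f) (.par g h), Term.par (.seq e g) (.seq f h))}

/-- `⊑^sp`: the smallest precongruence on series-parallel pomsets satisfying the
exchange inequality. -/
inductive spSub {A : Type} : Pomset A → Pomset A → Prop
  | refl {U : Pomset A} : U.IsSP → spSub U U
  | trans {U V W} : spSub U V → spSub V W → spSub U W
  | seqCong {U V U' V'} : spSub U V → spSub U' V' → spSub (Pomset.seq U U') (Pomset.seq V V')
  | parCong {U V U' V'} : spSub U V → spSub U' V' → spSub (Pomset.par U U') (Pomset.par V V')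
  | exch {U V W X : Pomset A} : U.IsSP → V.IsSP → W.IsSP → X.IsSP →
      spSub (Pomset.seq (Pomset.par U V) (Pomset.par W X))
            (Pomset.par (Pomset.seq U W) (Pomset.seq V X))

/-! ### KA terms, grounded hypotheses, sequential reductions -/

/-- A term is a KA term when it contains no `∥`. -/
def Term.noPar {A : Type} : Term A → Prop
  | .zero => True
  | .one => True
  | .var _ => True
  | .add e f => e.noPar ∧ f.noPar
  | .seq e f => e.noPar ∧ f.noPar
  | .par _ _ => False
  | .star e => e.noPar

/-- A non-empty word. -/
def IsNonemptyWord {A : Type} (W : Pomset A) : Prop := W.IsWord ∧ W ≠ Pomset.empty A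

/-- A set of hypotheses is grounded when in each hypothesis `e ≤ f`, `e` is a KA term and
`⟦f⟧ = {W}` for a non-empty word `W`. -/
def Grounded {A : Type} (H : HypSet A) : Prop :=
  ∀ p ∈ H, p.1.noPar ∧ ∃ W : Pomset A, IsNonemptyWord W ∧ p.2.lang = {W}

/-- `≡_KA^H`: the congruence on terms generated by the axioms of `≡` not involving `∥`
together with the hypotheses of `H`. -/
inductive KACong {A : Type} (H : HypSet A) : Term A → Term A → Prop
  | refl (e) : KACong H e e
  | symm {e f} : KACong H e f → KACong H f e
  | trans {e f g} : KACong H e f → KACong H f g → KACong H e g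
  | addCong {e e' f f'} : KACong H e e' → KACong H f f' → KACong H (.add e f) (.add e' f')
  | seqCong {e e' f f'} : KACong H e e' → KACong H f f' → KACong H (.seq e f) (.seq e' f')
  | starCong {e e'} : KACong H e e' → KACong H (.star e) (.star e')
  | addZero (e) : KACong H (.add e .zero) e
  | addIdem (e) : KACong H (.add e e) e
  | addComm (e f) : KACong H (.add e f) (.add f e)
  | addAssoc (e f g) : KACong H (.add e (.add f g)) (.add (.add e f) g)
  | seqAssoc (e f g) : KACong H (.seq e (.seq f g)) (.seq (.seq e f) g)
  | seqDistL (e f g) : KACong H (.seq e (.add f g)) (.add (.seq e f) (.seq e g))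
  | seqDistR (e f g) : KACong H (.seq (.add e f) g) (.add (.seq e g) (.seq f g))
  | seqOneR (e) : KACong H (.seq e .one) e
  | seqOneL (e) : KACong H (.seq .one e) e
  | seqZeroR (e) : KACong H (.seq e .zero) .zero
  | seqZeroL (e) : KACong H (.seq .zero e) .zero
  | starUnfoldL (e) : KACong H (.add .one (.seq e (.star e))) (.star e)
  | starUnfoldR (e) : KACong H (.add .one (.seq (.star e) e)) (.star e)
  | lfpL {e f g} : KACong H (.add (.add e (.seq f g)) g) g →
      KACong H (.add (.seq (.star f) e) g) g
  | lfpR {e f g} : KACong H (.add (.add e (.seq f g)) f) f →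
      KACong H (.add (.seq e (.star g)) f) f
  | hyp {e f} : (e, f) ∈ H → KACong H (.add e f) f

/-- A sequential reduction from `H` to `H'`. -/
structure IsSeqReduction {A : Type} (H H' : HypSet A) (r : Term A → Term A) : Prop where
  implies : Implies H H'
  equiv : ∀ e : Term A, e.noPar → KACong H e (r e)
  closure_eq : ∀ e : Term A, e.noPar → seqCl H e.lang = seqCl H' (r e).lang

/-- Extension of a map on (KA) terms to all CKA terms, homomorphically on `∥`. -/
def parExt {A : Type} (r : Term A → Term A) : Term A → Term A
  | .par e f => .par (parExt r e) (parExt r f)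
  | e => r e

/-! ### Inductive characterisation of sp contexts -/

/-- The generators of series-parallel contexts (Lemma: `PC^sp` is the smallest such set). -/
inductive GenCtx {A : Type} : Pomset (Option A) → Prop
  | star : GenCtx (Pomset.single (none : Option A))
  | seqL {U : Pomset A} {C} : U.IsSP → GenCtx C → GenCtx (Pomset.seq (Pomset.map some U) C)
  | seqR {C} {V : Pomset A} : GenCtx C → V.IsSP → GenCtx (Pomset.seq C (Pomset.map some V))
  | par {U : Pomset A} {C} : U.IsSP → GenCtx C → GenCtx (Pomset.par (Pomset.map some U) C)

/-! ### Reification -/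

/-- Homomorphic extension of a letter map to terms. -/
def rTerm {A : Type} (r : A → Term A) : Term A → Term A
  | .zero => .zero
  | .one => .one
  | .var a => r a
  | .add e f => .add (rTerm r e) (rTerm r f)
  | .seq e f => .seq (rTerm r e) (rTerm r f)
  | .par e f => .par (rTerm r e) (rTerm r f)
  | .star e => .star (rTerm r e)

/-- All letters of a term lie in `Γ`. -/
def TermOver {A : Type} (Γ : Set A) : Term A → Prop
  | .zero => True
  | .one => True
  | .var a => a ∈ Γ
  | .add e f => TermOver Γ e ∧ TermOver Γ f
  | .seq e f => TermOver Γ e ∧ TermOver Γ f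
  | .par e f => TermOver Γ e ∧ TermOver Γ f
  | .star e => TermOver Γ e

/-- Extension of a letter map `r` to (series-parallel) pomsets, as a relation:
`rMap r U V` means `V ∈ r(U)`. -/
inductive rMap {A : Type} (r : A → Term A) : Pomset A → Pomset A → Prop
  | one : rMap r (Pomset.empty A) (Pomset.empty A)
  | var (a : A) {V} : V ∈ (r a).lang → rMap r (Pomset.single a) V
  | seq {U U' V V'} : rMap r U V → rMap r U' V' →
      rMap r (Pomset.seq U U') (Pomset.seq V V')
  | par {U U' V V'} : rMap r U V → rMap r U' V' →
      rMap r (Pomset.par U U') (Pomset.par V V')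

/-- Image of a language under (the pomset extension of) `r`. -/
def rImg {A : Type} (r : A → Term A) (L : Lang A) : Lang A := {V | ∃ U ∈ L, rMap r U V}

/-- Series-parallel pomsets over the subalphabet `Γ`. -/
def SPover {A : Type} (Γ : Set A) : Lang A := {U | U.IsSP ∧ U.Over Γ}

/-- `r : Σ → Term Γ` is a reification from `H` to `H'`. -/
structure IsReification {A : Type} (Γ : Set A) (H H' : HypSet A) (r : A → Term A) : Prop where
  toGamma : ∀ a : A, TermOver Γ (r a)
  equiv : ∀ a : A, CongH H (r a) (.var a)
  expansive : ∀ a ∈ Γ, LeH (∅ : HypSet A) (.var a) (r a)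
  preserves : ∀ L : Lang A, L ⊆ SPover Γ → cl H' L ⊆ SPover Γ
  hyps : ∀ p ∈ H, LeH H' (rTerm r p.1) (rTerm r p.2)

end CKAH

namespace CKAH

/-!
Substituting `⟦r a⟧` for the letters `a` maps the language of a term `e` to the language of `r e`
and commutes with `·`, `∥` and unions of languages. By induction on its construction, inserting into
a series-parallel context therefore preserves inclusions of substituted languages up to
`H'`-closure, so that a step of the `H`-closure along `e ≤ f` is simulated in the `H'`-closure by
`r e ≦^{H'} r f` and the soundness of `≡^{H'}`. Hence substitution turns `H`-closures into subsets
of `H'`-closures, and equality of `H`-closures is reflected.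
-/

/-! ### Isomorphism classes of labelled posets -/

/-- The pomset represented by a labelled poset. -/
def Pomset.mk {A : Type} (u : LPoset A) : Pomset A := ⟦u⟧

namespace Pomset

variable {A B : Type}

@[elab_as_elim]
theorem ind {p : Pomset A → Prop} (h : ∀ u, p (mk u)) (U : Pomset A) : p U :=
  Quotient.ind h U

theorem mk_eq_mk {u v : LPoset A} : mk u = mk v ↔ u.Iso v := Quotient.eq

theorem mk_eq_mk_of_surjective {u v : LPoset A} (f : u.carrier → v.carrier)
    (hf : Function.Surjective f) (hle : ∀ x y, x ≤ y ↔ f x ≤ f y)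
    (hlab : ∀ x, v.lab (f x) = u.lab x) : mk u = mk v :=
  mk_eq_mk.2 ⟨RelIso.ofSurjective (OrderEmbedding.ofMapLEIff f fun x y => (hle x y).symm) hf, hlab⟩

theorem seq_assoc (U V W : Pomset A) : (U.seq V).seq W = U.seq (V.seq W) := by
  induction U using ind with | _ u
  induction V using ind with | _ v
  induction W using ind with | _ w
  refine mk_eq_mk.2 ⟨OrderIso.sumLexAssoc u.carrier v.carrier w.carrier, ?_⟩
  rintro ((x | x) | x) <;> rfl

theorem par_assoc (U V W : Pomset A) : (U.par V).par W = U.par (V.par W) := by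
  induction U using ind with | _ u
  induction V using ind with | _ v
  induction W using ind with | _ w
  refine mk_eq_mk.2 ⟨OrderIso.sumAssoc u.carrier v.carrier w.carrier, ?_⟩
  rintro ((x | x) | x) <;> rfl

theorem par_comm (U V : Pomset A) : U.par V = V.par U := by
  induction U using ind with | _ u
  induction V using ind with | _ v
  refine mk_eq_mk.2 ⟨OrderIso.sumComm u.carrier v.carrier, ?_⟩
  rintro (x | x) <;> rfl

theorem seq_empty (U : Pomset A) : U.seq (empty A) = U := by
  induction U using ind with | _ u
  refine (mk_eq_mk_of_surjective (v := u.seqL (.emptyL A)) Sum.inlₗ ?_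
    (fun _ _ => Sum.Lex.inl_le_inl_iff.symm) fun _ => rfl).symm
  rintro (x | x)
  exacts [⟨x, rfl⟩, x.elim0]

theorem empty_seq (U : Pomset A) : (empty A).seq U = U := by
  induction U using ind with | _ u
  refine (mk_eq_mk_of_surjective (v := (LPoset.emptyL A).seqL u) Sum.inrₗ ?_
    (fun _ _ => Sum.Lex.inr_le_inr_iff.symm) fun _ => rfl).symm
  rintro (x | x)
  exacts [x.elim0, ⟨x, rfl⟩]

theorem par_empty (U : Pomset A) : U.par (empty A) = U := by
  induction U using ind with | _ u
  refine (mk_eq_mk_of_surjective (v := u.parL (.emptyL A)) Sum.inl ?_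
    (fun _ _ => Sum.inl_le_inl_iff.symm) fun _ => rfl).symm
  rintro (x | x)
  exacts [⟨x, rfl⟩, x.elim0]

theorem map_empty (f : A → B) : (empty A).map f = empty B :=
  mk_eq_mk.2 ⟨OrderIso.refl (Fin 0), fun x => x.elim0⟩

theorem map_seq (f : A → B) (U V : Pomset A) : (U.seq V).map f = (U.map f).seq (V.map f) := by
  induction U using ind with | _ u
  induction V using ind with | _ v
  refine mk_eq_mk.2 ⟨OrderIso.refl (u.carrier ⊕ₗ v.carrier), ?_⟩
  rintro (x | x) <;> rfl

theorem map_par (f : A → B) (U V : Pomset A) : (U.par V).map f = (U.map f).par (V.map f) := by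
  induction U using ind with | _ u
  induction V using ind with | _ v
  refine mk_eq_mk.2 ⟨OrderIso.refl (u.carrier ⊕ v.carrier), ?_⟩
  rintro (x | x) <;> rfl

theorem IsSP.map {U : Pomset A} (hU : U.IsSP) (f : A → B) : (U.map f).IsSP := by
  induction hU with
  | empty => exact map_empty f ▸ .empty
  | single a => exact .single (f a)
  | seq _ _ ihU ihV => exact map_seq f _ _ ▸ ihU.seq ihV
  | par _ _ ihU ihV => exact map_par f _ _ ▸ ihU.par ihV

theorem over_seq {Γ : Set A} {U V : Pomset A} : (U.seq V).Over Γ ↔ U.Over Γ ∧ V.Over Γ := by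
  induction U using ind with | _ u
  induction V using ind with | _ v
  exact Sum.forall

theorem over_par {Γ : Set A} {U V : Pomset A} : (U.par V).Over Γ ↔ U.Over Γ ∧ V.Over Γ := by
  induction U using ind with | _ u
  induction V using ind with | _ v
  exact Sum.forall

end Pomset

/-! ### Series-parallel contexts -/

theorem existsUnique_sum {α β : Type*} {p : α ⊕ β → Prop} :
    (∃! x, p x) ↔ ((∃! a, p (.inl a)) ∧ ∀ b, ¬p (.inr b)) ∨
      (∀ a, ¬p (.inl a)) ∧ ∃! b, p (.inr b) := by
  simp only [ExistsUnique, Sum.exists, Sum.forall]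
  grind

namespace Pomset

variable {A : Type}

theorem over_map_some (U : Pomset A) : (U.map some).Over {none}ᶜ := by
  induction U using ind with | _ u
  exact fun x => Option.some_ne_none (u.lab x)

theorem IsSP.exists_map_some_eq {U : Pomset (Option A)} (hU : U.IsSP) (hstar : U.Over {none}ᶜ) :
    ∃ V : Pomset A, V.IsSP ∧ V.map some = U := by
  induction hU with
  | empty => exact ⟨_, .empty, map_empty some⟩
  | single a =>
    obtain ⟨a, rfl⟩ := Option.ne_none_iff_exists'.1 (hstar PUnit.unit)
    exact ⟨_, .single a, rfl⟩
  | seq _ _ ihU ihV =>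
    obtain ⟨U, hU, rfl⟩ := ihU (over_seq.1 hstar).1
    obtain ⟨V, hV, rfl⟩ := ihV (over_seq.1 hstar).2
    exact ⟨_, hU.seq hV, map_seq some U V⟩
  | par _ _ ihU ihV =>
    obtain ⟨U, hU, rfl⟩ := ihU (over_par.1 hstar).1
    obtain ⟨V, hV, rfl⟩ := ihV (over_par.1 hstar).2
    exact ⟨_, hU.par hV, map_par some U V⟩

theorem isCtx_seq {C D : Pomset (Option A)} : (C.seq D).IsCtx ↔
    C.IsCtx ∧ D.Over {none}ᶜ ∨ C.Over {none}ᶜ ∧ D.IsCtx := by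
  induction C using ind with | _ c
  induction D using ind with | _ d
  exact existsUnique_sum

theorem isCtx_par {C D : Pomset (Option A)} : (C.par D).IsCtx ↔
    C.IsCtx ∧ D.Over {none}ᶜ ∨ C.Over {none}ᶜ ∧ D.IsCtx := by
  induction C using ind with | _ c
  induction D using ind with | _ d
  exact existsUnique_sum

theorem not_isCtx_empty : ¬(empty (Option A)).IsCtx := by
  rintro ⟨x, -⟩
  exact x.elim0

theorem isCtx_single {a : Option A} : (single a).IsCtx ↔ a = none :=
  ⟨fun ⟨_, ha, _⟩ => ha, fun ha => ⟨PUnit.unit, ha, fun _ _ => rfl⟩⟩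

theorem IsSPCtx.seq_map_some {C : Pomset (Option A)} {V : Pomset A} (hC : C.IsSPCtx)
    (hV : V.IsSP) : (C.seq (V.map some)).IsSPCtx :=
  ⟨isCtx_seq.2 (.inl ⟨hC.1, over_map_some V⟩), hC.2.seq (hV.map some)⟩

theorem IsSPCtx.map_some_seq {C : Pomset (Option A)} {U : Pomset A} (hC : C.IsSPCtx)
    (hU : U.IsSP) : ((U.map some).seq C).IsSPCtx :=
  ⟨isCtx_seq.2 (.inr ⟨over_map_some U, hC.1⟩), (hU.map some).seq hC.2⟩

theorem IsSPCtx.map_some_par {C : Pomset (Option A)} {U : Pomset A} (hC : C.IsSPCtx)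
    (hU : U.IsSP) : ((U.map some).par C).IsSPCtx :=
  ⟨isCtx_par.2 (.inr ⟨over_map_some U, hC.1⟩), (hU.map some).par hC.2⟩

theorem IsSPCtx.genCtx {C : Pomset (Option A)} (hC : C.IsSPCtx) : GenCtx C := by
  obtain ⟨hstar, hsp⟩ := hC
  induction hsp with
  | empty => exact absurd hstar not_isCtx_empty
  | single a => exact isCtx_single.1 hstar ▸ .star
  | seq hC hD ihC ihD =>
    rcases isCtx_seq.1 hstar with ⟨hstarC, hstarD⟩ | ⟨hstarC, hstarD⟩
    · obtain ⟨V, hV, rfl⟩ := hD.exists_map_some_eq hstarD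
      exact .seqR (ihC hstarC) hV
    · obtain ⟨U, hU, rfl⟩ := hC.exists_map_some_eq hstarC
      exact .seqL hU (ihD hstarD)
  | par hC hD ihC ihD =>
    rcases isCtx_par.1 hstar with ⟨hstarC, hstarD⟩ | ⟨hstarC, hstarD⟩
    · obtain ⟨V, hV, rfl⟩ := hD.exists_map_some_eq hstarD
      exact par_comm (V.map some) _ ▸ .par hV (ihC hstarC)
    · obtain ⟨U, hU, rfl⟩ := hC.exists_map_some_eq hstarC
      exact .par hU (ihD hstarD)

end Pomset

theorem GenCtx.isSPCtx {A : Type} {C : Pomset (Option A)} (hC : GenCtx C) : C.IsSPCtx := by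
  induction hC with
  | star => exact ⟨Pomset.isCtx_single.2 rfl, .single none⟩
  | seqL hU _ ih => exact ih.map_some_seq hU
  | seqR _ hV ih => exact ih.seq_map_some hV
  | par hU _ ih => exact ih.map_some_par hU

/-! ### Insertion into a context -/

namespace LPoset

variable {A : Type} {c : LPoset (Option A)} {u : LPoset A} {s : c.carrier}

theorem uniqueStarL_iff : c.uniqueStarL ↔ ∃ s, ∀ t, c.lab t = none ↔ t = s :=
  exists_congr fun _ => ⟨fun h t => ⟨h.2 t, fun ht => ht ▸ h.1⟩,
    fun h => ⟨(h _).2 rfl, fun t => (h t).1⟩⟩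

theorem insLe_inl_inr (hs : ∀ t, c.lab t = none ↔ t = s)
    {x : {x : c.carrier // c.lab x ≠ none}} {y : u.carrier} :
    insLe c u (.inl x) (.inr y) ↔ x.1 ≤ s := by
  simp only [insLe, uniqueStarL_iff.2 ⟨s, hs⟩, hs, true_and, exists_eq_left]

theorem insLe_inr_inl (hs : ∀ t, c.lab t = none ↔ t = s)
    {x : {x : c.carrier // c.lab x ≠ none}} {y : u.carrier} :
    insLe c u (.inr y) (.inl x) ↔ s ≤ x.1 := by
  simp only [insLe, uniqueStarL_iff.2 ⟨s, hs⟩, hs, true_and, exists_eq_left]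

end LPoset

namespace Pomset

variable {A : Type} {C : Pomset (Option A)}

theorem ins_star (U : Pomset A) : (single (none : Option A)).ins U = U := by
  induction U using ind with | _ u
  refine (mk_eq_mk_of_surjective (v := (LPoset.singleL none).insL u) Sum.inr ?_
    (fun _ _ => Iff.rfl) fun _ => rfl).symm
  rintro (⟨x, hx⟩ | x)
  exacts [absurd rfl hx, ⟨x, rfl⟩]

theorem ins_seq_map_some (hC : C.IsCtx) (V W : Pomset A) :
    (C.seq (V.map some)).ins W = (C.ins W).seq V := by
  induction C using ind with | _ c
  induction V using ind with | _ v
  induction W using ind with | _ w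
  obtain ⟨s, hstar⟩ := LPoset.uniqueStarL_iff.1 hC
  have hstar' : ∀ t, (c.seqL (v.mapL some)).lab t = none ↔ t = Sum.inlₗ s := by
    rintro (t | t)
    · exact (hstar t).trans Sum.inl_injective.eq_iff.symm
    · exact iff_of_false (Option.some_ne_none _) Sum.inr_ne_inl
  let f : ((c.insL w).seqL v).carrier → ((c.seqL (v.mapL some)).insL w).carrier
    | .inl (.inl x) => .inl ⟨.inl x.1, x.2⟩
    | .inl (.inr y) => .inr y
    | .inr z => .inl ⟨.inr z, Option.some_ne_none _⟩
  refine (mk_eq_mk_of_surjective f ?_ ?_ ?_).symm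
  · rintro (⟨x | z, hx⟩ | y)
    exacts [⟨.inl (.inl ⟨x, hx⟩), rfl⟩, ⟨.inr z, rfl⟩, ⟨.inl (.inr y), rfl⟩]
  · rintro ((x | y) | z) ((x' | y') | z')
    · exact Sum.Lex.inl_le_inl_iff.trans (Sum.Lex.inl_le_inl_iff (a := x.1)).symm
    · exact (Sum.Lex.inl_le_inl_iff.trans (LPoset.insLe_inl_inr hstar)).trans
        ((LPoset.insLe_inl_inr hstar').trans Sum.Lex.inl_le_inl_iff).symm
    · exact iff_of_true (Sum.Lex.inl_le_inr _ _) (Sum.Lex.inl_le_inr _ _)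
    · exact (Sum.Lex.inl_le_inl_iff.trans (LPoset.insLe_inr_inl hstar)).trans
        ((LPoset.insLe_inr_inl hstar').trans Sum.Lex.inl_le_inl_iff).symm
    · exact Sum.Lex.inl_le_inl_iff
    · exact iff_of_true (Sum.Lex.inl_le_inr _ _)
        ((LPoset.insLe_inr_inl hstar').2 (Sum.Lex.inl_le_inr _ _))
    · exact iff_of_false Sum.Lex.not_inr_le_inl Sum.Lex.not_inr_le_inl
    · exact iff_of_false Sum.Lex.not_inr_le_inl
        (Sum.Lex.not_inr_le_inl ∘ (LPoset.insLe_inl_inr hstar').1)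
    · exact Sum.Lex.inr_le_inr_iff.trans Sum.Lex.inr_le_inr_iff.symm
  · rintro ((x | y) | z) <;> rfl

theorem ins_map_some_seq (hC : C.IsCtx) (V W : Pomset A) :
    ((V.map some).seq C).ins W = V.seq (C.ins W) := by
  induction C using ind with | _ c
  induction V using ind with | _ v
  induction W using ind with | _ w
  obtain ⟨s, hstar⟩ := LPoset.uniqueStarL_iff.1 hC
  have hstar' : ∀ t, ((v.mapL some).seqL c).lab t = none ↔ t = Sum.inrₗ s := by
    rintro (t | t)
    · exact iff_of_false (Option.some_ne_none _) Sum.inl_ne_inr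
    · exact (hstar t).trans Sum.inr_injective.eq_iff.symm
  let f : (v.seqL (c.insL w)).carrier → (((v.mapL some).seqL c).insL w).carrier
    | .inl z => .inl ⟨.inl z, Option.some_ne_none _⟩
    | .inr (.inl x) => .inl ⟨.inr x.1, x.2⟩
    | .inr (.inr y) => .inr y
  refine (mk_eq_mk_of_surjective f ?_ ?_ ?_).symm
  · rintro (⟨z | x, hx⟩ | y)
    exacts [⟨.inl z, rfl⟩, ⟨.inr (.inl ⟨x, hx⟩), rfl⟩, ⟨.inr (.inr y), rfl⟩]
  · rintro (z | x | y) (z' | x' | y')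
    · exact Sum.Lex.inl_le_inl_iff.trans Sum.Lex.inl_le_inl_iff.symm
    · exact iff_of_true (Sum.Lex.inl_le_inr _ _) (Sum.Lex.inl_le_inr _ _)
    · exact iff_of_true (Sum.Lex.inl_le_inr _ _)
        ((LPoset.insLe_inl_inr hstar').2 (Sum.Lex.inl_le_inr _ _))
    · exact iff_of_false Sum.Lex.not_inr_le_inl Sum.Lex.not_inr_le_inl
    · exact Sum.Lex.inr_le_inr_iff.trans (Sum.Lex.inr_le_inr_iff (a := x.1)).symm
    · exact (Sum.Lex.inr_le_inr_iff.trans (LPoset.insLe_inl_inr hstar)).trans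
        ((LPoset.insLe_inl_inr hstar').trans Sum.Lex.inr_le_inr_iff).symm
    · exact iff_of_false Sum.Lex.not_inr_le_inl
        (Sum.Lex.not_inr_le_inl ∘ (LPoset.insLe_inr_inl hstar').1)
    · exact (Sum.Lex.inr_le_inr_iff.trans (LPoset.insLe_inr_inl hstar)).trans
        ((LPoset.insLe_inr_inl hstar').trans Sum.Lex.inr_le_inr_iff).symm
    · exact Sum.Lex.inr_le_inr_iff
  · rintro (z | x | y) <;> rfl

theorem ins_map_some_par (hC : C.IsCtx) (V W : Pomset A) :
    ((V.map some).par C).ins W = V.par (C.ins W) := by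
  induction C using ind with | _ c
  induction V using ind with | _ v
  induction W using ind with | _ w
  obtain ⟨s, hstar⟩ := LPoset.uniqueStarL_iff.1 hC
  have hstar' : ∀ t, ((v.mapL some).parL c).lab t = none ↔ t = Sum.inr s := by
    rintro (t | t)
    · exact iff_of_false (Option.some_ne_none _) Sum.inl_ne_inr
    · exact (hstar t).trans Sum.inr_injective.eq_iff.symm
  let f : (v.parL (c.insL w)).carrier → (((v.mapL some).parL c).insL w).carrier
    | .inl z => .inl ⟨.inl z, Option.some_ne_none _⟩
    | .inr (.inl x) => .inl ⟨.inr x.1, x.2⟩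
    | .inr (.inr y) => .inr y
  refine (mk_eq_mk_of_surjective f ?_ ?_ ?_).symm
  · rintro (⟨z | x, hx⟩ | y)
    exacts [⟨.inl z, rfl⟩, ⟨.inr (.inl ⟨x, hx⟩), rfl⟩, ⟨.inr (.inr y), rfl⟩]
  · rintro (z | x | y) (z' | x' | y')
    · exact Sum.inl_le_inl_iff.trans Sum.inl_le_inl_iff.symm
    · exact iff_of_false Sum.not_inl_le_inr Sum.not_inl_le_inr
    · exact iff_of_false Sum.not_inl_le_inr
        (Sum.not_inl_le_inr ∘ (LPoset.insLe_inl_inr hstar').1)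
    · exact iff_of_false Sum.not_inr_le_inl Sum.not_inr_le_inl
    · exact Sum.inr_le_inr_iff.trans (Sum.inr_le_inr_iff (a := x.1)).symm
    · exact (Sum.inr_le_inr_iff.trans (LPoset.insLe_inl_inr hstar)).trans
        ((LPoset.insLe_inl_inr hstar').trans Sum.inr_le_inr_iff).symm
    · exact iff_of_false Sum.not_inr_le_inl
        (Sum.not_inr_le_inl ∘ (LPoset.insLe_inr_inl hstar').1)
    · exact (Sum.inr_le_inr_iff.trans (LPoset.insLe_inr_inl hstar)).trans
        ((LPoset.insLe_inr_inl hstar').trans Sum.inr_le_inr_iff).symm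
    · exact Sum.inr_le_inr_iff
  · rintro (z | x | y) <;> rfl

end Pomset

/-! ### Pomset languages -/

namespace Lang

variable {A : Type} {L L' K K' M : Lang A}

theorem seq_eq_image2 (L K : Lang A) : seq L K = Set.image2 Pomset.seq L K := by
  ext W
  simp only [seq, Set.mem_ofPred_eq, Set.mem_image2, eq_comm]

theorem par_eq_image2 (L K : Lang A) : par L K = Set.image2 Pomset.par L K := by
  ext W
  simp only [par, Set.mem_ofPred_eq, Set.mem_image2, eq_comm]

theorem seq_mono (hL : L ⊆ L') (hK : K ⊆ K') : seq L K ⊆ seq L' K' := by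
  simpa only [seq_eq_image2] using Set.image2_subset hL hK

theorem par_mono (hL : L ⊆ L') (hK : K ⊆ K') : par L K ⊆ par L' K' := by
  simpa only [par_eq_image2] using Set.image2_subset hL hK

theorem seq_assoc (L K M : Lang A) : seq (seq L K) M = seq L (seq K M) := by
  simpa only [seq_eq_image2] using Set.image2_assoc Pomset.seq_assoc

theorem par_assoc (L K M : Lang A) : par (par L K) M = par L (par K M) := by
  simpa only [par_eq_image2] using Set.image2_assoc Pomset.par_assoc

theorem par_comm (L K : Lang A) : par L K = par K L := by
  simpa only [par_eq_image2] using Set.image2_comm Pomset.par_comm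

theorem seq_one (L : Lang A) : seq L {Pomset.empty A} = L := by
  simp only [seq_eq_image2, Set.image2_singleton_right, Pomset.seq_empty, Set.image_id']

theorem one_seq (L : Lang A) : seq {Pomset.empty A} L = L := by
  simp only [seq_eq_image2, Set.image2_singleton_left, Pomset.empty_seq, Set.image_id']

theorem par_one (L : Lang A) : par L {Pomset.empty A} = L := by
  simp only [par_eq_image2, Set.image2_singleton_right, Pomset.par_empty, Set.image_id']

theorem seq_empty (L : Lang A) : seq L ∅ = ∅ := by
  simp only [seq_eq_image2, Set.image2_empty_right]

theorem empty_seq (L : Lang A) : seq ∅ L = ∅ := by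
  simp only [seq_eq_image2, Set.image2_empty_left]

theorem par_empty (L : Lang A) : par L ∅ = ∅ := by
  simp only [par_eq_image2, Set.image2_empty_right]

theorem seq_union (L K M : Lang A) : seq L (K ∪ M) = seq L K ∪ seq L M := by
  simp only [seq_eq_image2, Set.image2_union_right]

theorem union_seq (L K M : Lang A) : seq (L ∪ K) M = seq L M ∪ seq K M := by
  simp only [seq_eq_image2, Set.image2_union_left]

theorem par_union (L K M : Lang A) : par L (K ∪ M) = par L K ∪ par L M := by
  simp only [par_eq_image2, Set.image2_union_right]

theorem seq_star (L K : Lang A) : seq L K.star = ⋃ n, seq L (K.pow n) := by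
  simp only [star, seq_eq_image2, Set.image2_iUnion_right]

theorem star_seq (L K : Lang A) : seq L.star K = ⋃ n, seq (L.pow n) K := by
  simp only [star, seq_eq_image2, Set.image2_iUnion_left]

theorem pow_succ' (L : Lang A) (n : ℕ) : L.pow (n + 1) = seq L (L.pow n) := by
  induction n with
  | zero => exact (one_seq L).trans (seq_one L).symm
  | succ n ih => exact (congrArg (seq · L) ih).trans (seq_assoc L (L.pow n) L)

theorem star_eq_one_union_star_seq (L : Lang A) :
    L.star = {Pomset.empty A} ∪ seq L.star L := by
  rw [star_seq, star, ← Set.union_iUnion_nat_succ]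
  rfl

theorem star_eq_one_union_seq_star (L : Lang A) :
    L.star = {Pomset.empty A} ∪ seq L L.star := by
  simp only [seq_star, ← pow_succ']
  rw [star, ← Set.union_iUnion_nat_succ]
  rfl

theorem seq_subset_SPset (hL : L ⊆ SPset A) (hK : K ⊆ SPset A) : seq L K ⊆ SPset A := by
  rintro _ ⟨U, hU, V, hV, rfl⟩
  exact (hL hU).seq (hK hV)

theorem par_subset_SPset (hL : L ⊆ SPset A) (hK : K ⊆ SPset A) : par L K ⊆ SPset A := by
  rintro _ ⟨U, hU, V, hV, rfl⟩
  exact (hL hU).par (hK hV)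

theorem pow_subset_SPset (hL : L ⊆ SPset A) : ∀ n, L.pow n ⊆ SPset A
  | 0 => Set.singleton_subset_iff.2 .empty
  | n + 1 => seq_subset_SPset (pow_subset_SPset hL n) hL

end Lang

theorem Term.lang_subset_SPset {A : Type} (e : Term A) : e.lang ⊆ SPset A := by
  induction e with
  | zero => exact Set.empty_subset _
  | one => exact Set.singleton_subset_iff.2 .empty
  | var a => exact Set.singleton_subset_iff.2 (.single a)
  | add e f ihe ihf => exact Set.union_subset ihe ihf
  | seq e f ihe ihf => exact Lang.seq_subset_SPset ihe ihf
  | par e f ihe ihf => exact Lang.par_subset_SPset ihe ihf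
  | star e ihe => exact Set.iUnion_subset (Lang.pow_subset_SPset ihe)

namespace Ctx

variable {A : Type} {C : Pomset (Option A)}

theorem img_eq_image (C : Pomset (Option A)) (L : Lang A) : img C L = C.ins '' L := by
  ext W
  simp only [img, Set.mem_ofPred_eq, Set.mem_image, eq_comm]

theorem img_star (L : Lang A) : img (.single none) L = L := by
  simp only [img_eq_image, Pomset.ins_star, Set.image_id']

theorem img_map_some_seq (hC : C.IsCtx) (U : Pomset A) (L : Lang A) :
    img ((U.map some).seq C) L = Lang.seq {U} (img C L) := by
  simp only [img_eq_image, Lang.seq_eq_image2, Set.image2_singleton_left, Set.image_image,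
    Pomset.ins_map_some_seq hC]

theorem img_seq_map_some (hC : C.IsCtx) (U : Pomset A) (L : Lang A) :
    img (C.seq (U.map some)) L = Lang.seq (img C L) {U} := by
  simp only [img_eq_image, Lang.seq_eq_image2, Set.image2_singleton_right, Set.image_image,
    Pomset.ins_seq_map_some hC]

theorem img_map_some_par (hC : C.IsCtx) (U : Pomset A) (L : Lang A) :
    img ((U.map some).par C) L = Lang.par {U} (img C L) := by
  simp only [img_eq_image, Lang.par_eq_image2, Set.image2_singleton_left, Set.image_image,
    Pomset.ins_map_some_par hC]

end Ctx

/-! ### The closure operator -/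

section Closure

variable {A : Type} {H : HypSet A} {L L' K K' M : Lang A}

theorem subset_cl (H : HypSet A) (L : Lang A) : L ⊆ cl H L := fun _ => closure.base

theorem cl_subset (hL : L ⊆ M) (hM : ∀ e f, (e, f) ∈ H → ∀ C : Pomset (Option A), C.IsSPCtx →
    (∀ V ∈ f.lang, C.ins V ∈ M) → ∀ U ∈ e.lang, C.ins U ∈ M) : cl H L ⊆ M := fun W hW => by
  induction hW with
  | base hU => exact hL hU
  | step hef hC _ hU ih => exact hM _ _ hef _ hC ih _ hU

theorem cl_subset_cl_iff : cl H L ⊆ cl H M ↔ L ⊆ cl H M :=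
  ⟨(subset_cl H L).trans, fun h => cl_subset h fun _ _ hef _ hC hf _ => closure.step hef hC hf⟩

theorem cl_mono (h : L ⊆ M) : cl H L ⊆ cl H M :=
  cl_subset_cl_iff.2 (h.trans (subset_cl H M))

theorem cl_eq_cl_iff : cl H L = cl H M ↔ L ⊆ cl H M ∧ M ⊆ cl H L := by
  rw [Set.Subset.antisymm_iff, cl_subset_cl_iff, cl_subset_cl_iff]

theorem cl_union_eq_cl_iff : cl H (L ∪ M) = cl H M ↔ L ⊆ cl H M := by
  rw [cl_eq_cl_iff, Set.union_subset_iff]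
  exact ⟨fun h => h.1.1, fun h =>
    ⟨⟨h, subset_cl H M⟩, Set.subset_union_right.trans (subset_cl H _)⟩⟩

theorem map_mem_cl {g : Pomset A → Pomset A} {φ : Pomset (Option A) → Pomset (Option A)}
    (hφ : ∀ C, C.IsSPCtx → (φ C).IsSPCtx ∧ ∀ V, (φ C).ins V = g (C.ins V))
    (hg : ∀ U ∈ L, g U ∈ cl H M) : ∀ U ∈ cl H L, g U ∈ cl H M := by
  suffices cl H L ⊆ g ⁻¹' cl H M from this
  refine cl_subset hg fun e f hef C hC hf U hU => ?_
  obtain ⟨hφC, hins⟩ := hφ C hC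
  rw [Set.mem_preimage, ← hins]
  exact closure.step hef hφC (fun V hV => (hins V).symm ▸ hf V hV) hU

theorem seq_cl_subset (hL : L ⊆ SPset A) : Lang.seq L (cl H M) ⊆ cl H (Lang.seq L M) := by
  rintro _ ⟨U, hU, V, hV, rfl⟩
  exact map_mem_cl (g := U.seq) (φ := (U.map some).seq)
    (fun C hC => ⟨hC.map_some_seq (hL hU), Pomset.ins_map_some_seq hC.1 U⟩)
    (fun V hV => subset_cl H (Lang.seq L M) ⟨U, hU, V, hV, rfl⟩) V hV

theorem cl_seq_subset (hM : M ⊆ SPset A) : Lang.seq (cl H L) M ⊆ cl H (Lang.seq L M) := by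
  rintro _ ⟨U, hU, V, hV, rfl⟩
  exact map_mem_cl (g := (·.seq V)) (φ := (·.seq (V.map some)))
    (fun C hC => ⟨hC.seq_map_some (hM hV), Pomset.ins_seq_map_some hC.1 V⟩)
    (fun U hU => subset_cl H (Lang.seq L M) ⟨U, hU, V, hV, rfl⟩) U hU

theorem par_cl_subset (hL : L ⊆ SPset A) : Lang.par L (cl H M) ⊆ cl H (Lang.par L M) := by
  rintro _ ⟨U, hU, V, hV, rfl⟩
  exact map_mem_cl (g := U.par) (φ := (U.map some).par)
    (fun C hC => ⟨hC.map_some_par (hL hU), Pomset.ins_map_some_par hC.1 U⟩)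
    (fun V hV => subset_cl H (Lang.par L M) ⟨U, hU, V, hV, rfl⟩) V hV

theorem seq_subset_cl (hLSP : L ⊆ SPset A) (hKSP : K' ⊆ SPset A) (hL : L ⊆ cl H L')
    (hK : K ⊆ cl H K') : Lang.seq L K ⊆ cl H (Lang.seq L' K') :=
  calc Lang.seq L K ⊆ Lang.seq L (cl H K') := Lang.seq_mono subset_rfl hK
    _ ⊆ cl H (Lang.seq L K') := seq_cl_subset hLSP
    _ ⊆ cl H (Lang.seq L' K') :=
      cl_subset_cl_iff.2 ((Lang.seq_mono hL subset_rfl).trans (cl_seq_subset hKSP))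

theorem par_subset_cl (hLSP : L ⊆ SPset A) (hKSP : K' ⊆ SPset A) (hL : L ⊆ cl H L')
    (hK : K ⊆ cl H K') : Lang.par L K ⊆ cl H (Lang.par L' K') :=
  calc Lang.par L K ⊆ Lang.par L (cl H K') := Lang.par_mono subset_rfl hK
    _ ⊆ cl H (Lang.par L K') := par_cl_subset hLSP
    _ = cl H (Lang.par K' L) := by rw [Lang.par_comm]
    _ ⊆ cl H (Lang.par K' L') :=
      cl_subset_cl_iff.2 ((Lang.par_mono subset_rfl hL).trans (par_cl_subset hKSP))
    _ = cl H (Lang.par L' K') := by rw [Lang.par_comm]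

theorem pow_subset_cl (hSP : L ⊆ SPset A) (hSP' : L' ⊆ SPset A) (hL : L ⊆ cl H L') :
    ∀ n, L.pow n ⊆ cl H (L'.pow n)
  | 0 => subset_cl H _
  | n + 1 => seq_subset_cl (Lang.pow_subset_SPset hSP n) hSP' (pow_subset_cl hSP hSP' hL n) hL

theorem star_subset_cl (hSP : L ⊆ SPset A) (hSP' : L' ⊆ SPset A) (hL : L ⊆ cl H L') :
    L.star ⊆ cl H L'.star :=
  Set.iUnion_subset fun n =>
    (pow_subset_cl hSP hSP' hL n).trans (cl_mono (Set.subset_iUnion L'.pow n))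

theorem cl_union_congr (hL : cl H L = cl H L') (hK : cl H K = cl H K') :
    cl H (L ∪ K) = cl H (L' ∪ K') := by
  rw [cl_eq_cl_iff] at hL hK ⊢
  exact ⟨Set.union_subset (hL.1.trans (cl_mono Set.subset_union_left))
      (hK.1.trans (cl_mono Set.subset_union_right)),
    Set.union_subset (hL.2.trans (cl_mono Set.subset_union_left))
      (hK.2.trans (cl_mono Set.subset_union_right))⟩

theorem cl_seq_congr (hLSP : L ⊆ SPset A) (hLSP' : L' ⊆ SPset A) (hKSP : K ⊆ SPset A)
    (hKSP' : K' ⊆ SPset A) (hL : cl H L = cl H L') (hK : cl H K = cl H K') :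
    cl H (Lang.seq L K) = cl H (Lang.seq L' K') := by
  rw [cl_eq_cl_iff] at hL hK ⊢
  exact ⟨seq_subset_cl hLSP hKSP' hL.1 hK.1, seq_subset_cl hLSP' hKSP hL.2 hK.2⟩

theorem cl_par_congr (hLSP : L ⊆ SPset A) (hLSP' : L' ⊆ SPset A) (hKSP : K ⊆ SPset A)
    (hKSP' : K' ⊆ SPset A) (hL : cl H L = cl H L') (hK : cl H K = cl H K') :
    cl H (Lang.par L K) = cl H (Lang.par L' K') := by
  rw [cl_eq_cl_iff] at hL hK ⊢
  exact ⟨par_subset_cl hLSP hKSP' hL.1 hK.1, par_subset_cl hLSP' hKSP hL.2 hK.2⟩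

theorem cl_star_congr (hLSP : L ⊆ SPset A) (hLSP' : L' ⊆ SPset A) (hL : cl H L = cl H L') :
    cl H L.star = cl H L'.star := by
  rw [cl_eq_cl_iff] at hL ⊢
  exact ⟨star_subset_cl hLSP hLSP' hL.1, star_subset_cl hLSP' hLSP hL.2⟩

theorem star_seq_subset_cl (hSP : L ⊆ SPset A) (hM : M ⊆ cl H K) (hL : Lang.seq L K ⊆ cl H K) :
    Lang.seq L.star M ⊆ cl H K := by
  rw [Lang.star_seq]
  refine Set.iUnion_subset fun n => ?_
  induction n with
  | zero => exact (Lang.one_seq M).subset.trans hM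
  | succ n ih =>
    calc Lang.seq (L.pow (n + 1)) M = Lang.seq L (Lang.seq (L.pow n) M) := by
          rw [Lang.pow_succ', Lang.seq_assoc]
      _ ⊆ Lang.seq L (cl H K) := Lang.seq_mono subset_rfl ih
      _ ⊆ cl H (Lang.seq L K) := seq_cl_subset hSP
      _ ⊆ cl H K := cl_subset_cl_iff.2 hL

theorem seq_star_subset_cl (hSP : L ⊆ SPset A) (hM : M ⊆ cl H K) (hL : Lang.seq K L ⊆ cl H K) :
    Lang.seq M L.star ⊆ cl H K := by
  rw [Lang.seq_star]
  refine Set.iUnion_subset fun n => ?_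
  induction n with
  | zero => exact (Lang.seq_one M).subset.trans hM
  | succ n ih =>
    calc Lang.seq M (L.pow (n + 1)) = Lang.seq (Lang.seq M (L.pow n)) L :=
          (Lang.seq_assoc M (L.pow n) L).symm
      _ ⊆ Lang.seq (cl H K) L := Lang.seq_mono ih subset_rfl
      _ ⊆ cl H (Lang.seq K L) := cl_seq_subset hSP
      _ ⊆ cl H K := cl_subset_cl_iff.2 hL

theorem lang_subset_cl_of_mem {e f : Term A} (hef : (e, f) ∈ H) : e.lang ⊆ cl H f.lang := by
  have hstar : (Pomset.single (none : Option A)).IsSPCtx := ⟨Pomset.isCtx_single.2 rfl, .single _⟩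
  intro U hU
  rw [← Pomset.ins_star U]
  exact closure.step hef hstar (fun V hV => closure.base (by rwa [Pomset.ins_star])) hU

end Closure

theorem CongH.cl_lang_eq {A : Type} {H : HypSet A} {e f : Term A} (h : CongH H e f) :
    cl H e.lang = cl H f.lang := by
  induction h with
  | refl => rfl
  | symm _ ih => exact ih.symm
  | trans _ _ ih ih' => exact ih.trans ih'
  | addCong _ _ ih ih' => exact cl_union_congr ih ih'
  | seqCong _ _ ih ih' =>
    exact cl_seq_congr (Term.lang_subset_SPset _) (Term.lang_subset_SPset _)
      (Term.lang_subset_SPset _) (Term.lang_subset_SPset _) ih ih'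
  | parCong _ _ ih ih' =>
    exact cl_par_congr (Term.lang_subset_SPset _) (Term.lang_subset_SPset _)
      (Term.lang_subset_SPset _) (Term.lang_subset_SPset _) ih ih'
  | starCong _ ih => exact cl_star_congr (Term.lang_subset_SPset _) (Term.lang_subset_SPset _) ih
  | addZero e => exact congrArg (cl H) (Set.union_empty _)
  | addIdem e => exact congrArg (cl H) (Set.union_self _)
  | addComm e f => exact congrArg (cl H) (Set.union_comm _ _)
  | addAssoc e f g => exact congrArg (cl H) (Set.union_assoc _ _ _).symm
  | seqAssoc e f g => exact congrArg (cl H) (Lang.seq_assoc _ _ _).symm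
  | seqDistL e f g => exact congrArg (cl H) (Lang.seq_union _ _ _)
  | seqDistR e f g => exact congrArg (cl H) (Lang.union_seq _ _ _)
  | seqOneR e => exact congrArg (cl H) (Lang.seq_one _)
  | seqOneL e => exact congrArg (cl H) (Lang.one_seq _)
  | seqZeroR e => exact congrArg (cl H) (Lang.seq_empty _)
  | seqZeroL e => exact congrArg (cl H) (Lang.empty_seq _)
  | parComm e f => exact congrArg (cl H) (Lang.par_comm _ _)
  | parOne e => exact congrArg (cl H) (Lang.par_one _)
  | parZero e => exact congrArg (cl H) (Lang.par_empty _)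
  | parAssoc e f g => exact congrArg (cl H) (Lang.par_assoc _ _ _).symm
  | parDist e f g => exact congrArg (cl H) (Lang.par_union _ _ _)
  | starUnfoldL e => exact congrArg (cl H) (Lang.star_eq_one_union_seq_star _).symm
  | starUnfoldR e => exact congrArg (cl H) (Lang.star_eq_one_union_star_seq _).symm
  | lfpL _ ih =>
    obtain ⟨hE, hFG⟩ := Set.union_subset_iff.1 (cl_union_eq_cl_iff.1 ih)
    exact cl_union_eq_cl_iff.2 (star_seq_subset_cl (Term.lang_subset_SPset _) hE hFG)
  | lfpR _ ih =>
    obtain ⟨hE, hFG⟩ := Set.union_subset_iff.1 (cl_union_eq_cl_iff.1 ih)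
    exact cl_union_eq_cl_iff.2 (seq_star_subset_cl (Term.lang_subset_SPset _) hE hFG)
  | hyp hef => exact cl_union_eq_cl_iff.2 (lang_subset_cl_of_mem hef)

theorem LeH.lang_subset_cl {A : Type} {H : HypSet A} {e f : Term A} (h : LeH H e f) :
    e.lang ⊆ cl H f.lang :=
  cl_union_eq_cl_iff.1 (CongH.cl_lang_eq h)

/-! ### Substitution of languages for letters -/

namespace LPoset

variable {A B : Type}

/-- The lexicographic sum of the labelled posets `v x` over the points `x` of `u`: every point `x`
is replaced by a copy of `v x`. -/
def lexSum (u : LPoset A) (v : u.carrier → LPoset B) : LPoset B where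
  carrier := Σₗ x, (v x).carrier
  fin := inferInstanceAs (Fintype (Σ x, (v x).carrier))
  lab p := (v (ofLex p).1).lab (ofLex p).2

/-- The point of `u.lexSum v` given by the point `y` of the copy of `v x`. -/
abbrev lexSumMk {u : LPoset A} (v : u.carrier → LPoset B) (x : u.carrier) (y : (v x).carrier) :
    (u.lexSum v).carrier :=
  toLex ⟨x, y⟩

variable {u u' : LPoset A}

theorem lexSumMk_le_lexSumMk_of_ne (v : u.carrier → LPoset B) {x x' : u.carrier} (h : x ≠ x')
    (y : (v x).carrier) (y' : (v x').carrier) : lexSumMk v x y ≤ lexSumMk v x' y' ↔ x ≤ x' :=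
  Sigma.Lex.le_def.trans
    ⟨fun hle => hle.elim le_of_lt fun ⟨hx, _⟩ => absurd hx h, fun hle => .inl (hle.lt_of_ne h)⟩

theorem lexSumMk_le_lexSumMk (v : u.carrier → LPoset B) (x : u.carrier) (y y' : (v x).carrier) :
    lexSumMk v x y ≤ lexSumMk v x y' ↔ y ≤ y' :=
  Sigma.Lex.le_def.trans
    ⟨fun h => h.elim (fun h => absurd h (lt_irrefl x)) fun ⟨_, h⟩ => h, fun h => .inr ⟨rfl, h⟩⟩

theorem lexSumMk_comp_le_iff (v : u'.carrier → LPoset B) {i : u.carrier → u'.carrier}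
    (hi : ∀ x x', i x ≤ i x' ↔ x ≤ x') (p p' : (u.lexSum (v ∘ i)).carrier) :
    p ≤ p' ↔ lexSumMk v (i p.1) p.2 ≤ lexSumMk v (i p'.1) p'.2 := by
  obtain ⟨x, y⟩ := p
  obtain ⟨x', y'⟩ := p'
  by_cases hx : x = x'
  · subst hx
    exact (lexSumMk_le_lexSumMk (v ∘ i) x y y').trans (lexSumMk_le_lexSumMk v (i x) y y').symm
  · have hix : i x ≠ i x' := fun h => hx (le_antisymm ((hi _ _).1 h.le) ((hi _ _).1 h.ge))
    exact ((lexSumMk_le_lexSumMk_of_ne (v ∘ i) hx y y').trans (hi x x').symm).trans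
      (lexSumMk_le_lexSumMk_of_ne v hix y y').symm

end LPoset

namespace Pomset

variable {A B : Type}

theorem mk_lexSum_congr {u u' : LPoset A} {v : u.carrier → LPoset B} {v' : u'.carrier → LPoset B}
    (e : u.carrier ≃o u'.carrier) (h : ∀ x, mk (v x) = mk (v' (e x))) :
    mk (u.lexSum v) = mk (u'.lexSum v') := by
  choose f hf using fun x => mk_eq_mk.1 (h x)
  refine mk_eq_mk_of_surjective (fun p => LPoset.lexSumMk v' (e p.1) (f p.1 p.2)) ?_ ?_ ?_
  · rintro ⟨x', y'⟩
    obtain ⟨x, rfl⟩ := e.surjective x'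
    obtain ⟨y, rfl⟩ := (f x).surjective y'
    exact ⟨⟨x, y⟩, rfl⟩
  · rintro ⟨x, y⟩ ⟨x', y'⟩
    by_cases hx : x = x'
    · subst hx
      exact ((LPoset.lexSumMk_le_lexSumMk v x y y').trans (f x).le_iff_le.symm).trans
        (LPoset.lexSumMk_le_lexSumMk v' (e x) (f x y) (f x y')).symm
    · exact ((LPoset.lexSumMk_le_lexSumMk_of_ne v hx y y').trans e.le_iff_le.symm).trans
        (LPoset.lexSumMk_le_lexSumMk_of_ne v' (e.injective.ne hx) (f x y) (f x' y')).symm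
  · exact fun p => hf p.1 p.2

theorem mk_lexSum_emptyL (v : (LPoset.emptyL A).carrier → LPoset B) :
    mk ((LPoset.emptyL A).lexSum v) = empty B :=
  mk_eq_mk_of_surjective (fun p => p.1) (fun x => x.elim0) (fun p => p.1.elim0) fun p => p.1.elim0

theorem mk_lexSum_singleL (a : A) (v : (LPoset.singleL a).carrier → LPoset B) :
    mk ((LPoset.singleL a).lexSum v) = mk (v PUnit.unit) :=
  (mk_eq_mk_of_surjective (LPoset.lexSumMk v PUnit.unit) (fun ⟨_, y⟩ => ⟨y, rfl⟩)
    (fun y y' => (LPoset.lexSumMk_le_lexSumMk v PUnit.unit y y').symm) fun _ => rfl).symm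

theorem mk_lexSum_seqL (u u' : LPoset A) (v : (u.seqL u').carrier → LPoset B) :
    mk ((u.seqL u').lexSum v) =
      (mk (u.lexSum (v ∘ Sum.inlₗ))).seq (mk (u'.lexSum (v ∘ Sum.inrₗ))) := by
  let f : ((u.lexSum (v ∘ Sum.inlₗ)).seqL (u'.lexSum (v ∘ Sum.inrₗ))).carrier →
      ((u.seqL u').lexSum v).carrier
    | .inl p => LPoset.lexSumMk v (Sum.inlₗ p.1) p.2
    | .inr p => LPoset.lexSumMk v (Sum.inrₗ p.1) p.2
  refine (mk_eq_mk_of_surjective f ?_ ?_ ?_).symm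
  · rintro ⟨x | x, y⟩
    exacts [⟨.inl ⟨x, y⟩, rfl⟩, ⟨.inr ⟨x, y⟩, rfl⟩]
  · rintro (p | p) (p' | p')
    · exact Sum.Lex.inl_le_inl_iff.trans
        (LPoset.lexSumMk_comp_le_iff v (fun _ _ => Sum.Lex.inl_le_inl_iff) p p')
    · exact iff_of_true (Sum.Lex.inl_le_inr _ _)
        ((LPoset.lexSumMk_le_lexSumMk_of_ne v Sum.inl_ne_inr _ _).2 (Sum.Lex.inl_le_inr _ _))
    · exact iff_of_false Sum.Lex.not_inr_le_inl
        (Sum.Lex.not_inr_le_inl ∘ (LPoset.lexSumMk_le_lexSumMk_of_ne v Sum.inr_ne_inl _ _).1)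
    · exact Sum.Lex.inr_le_inr_iff.trans
        (LPoset.lexSumMk_comp_le_iff v (fun _ _ => Sum.Lex.inr_le_inr_iff) p p')
  · rintro (p | p) <;> rfl

theorem mk_lexSum_parL (u u' : LPoset A) (v : (u.parL u').carrier → LPoset B) :
    mk ((u.parL u').lexSum v) =
      (mk (u.lexSum (v ∘ Sum.inl))).par (mk (u'.lexSum (v ∘ Sum.inr))) := by
  let f : ((u.lexSum (v ∘ Sum.inl)).parL (u'.lexSum (v ∘ Sum.inr))).carrier →
      ((u.parL u').lexSum v).carrier
    | .inl p => LPoset.lexSumMk v (Sum.inl p.1) p.2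
    | .inr p => LPoset.lexSumMk v (Sum.inr p.1) p.2
  refine (mk_eq_mk_of_surjective f ?_ ?_ ?_).symm
  · rintro ⟨x | x, y⟩
    exacts [⟨.inl ⟨x, y⟩, rfl⟩, ⟨.inr ⟨x, y⟩, rfl⟩]
  · rintro (p | p) (p' | p')
    · exact Sum.inl_le_inl_iff.trans
        (LPoset.lexSumMk_comp_le_iff v (fun _ _ => Sum.inl_le_inl_iff) p p')
    · exact iff_of_false Sum.not_inl_le_inr
        (Sum.not_inl_le_inr ∘ (LPoset.lexSumMk_le_lexSumMk_of_ne v Sum.inl_ne_inr _ _).1)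
    · exact iff_of_false Sum.not_inr_le_inl
        (Sum.not_inr_le_inl ∘ (LPoset.lexSumMk_le_lexSumMk_of_ne v Sum.inr_ne_inl _ _).1)
    · exact Sum.inr_le_inr_iff.trans
        (LPoset.lexSumMk_comp_le_iff v (fun _ _ => Sum.inr_le_inr_iff) p p')
  · rintro (p | p) <;> rfl

theorem exists_mk_lexSum_eq {u u' : LPoset A} {σ : A → Lang B} (h : u.Iso u')
    {v : u.carrier → LPoset B} (hv : ∀ x, mk (v x) ∈ σ (u.lab x)) :
    ∃ v' : u'.carrier → LPoset B, (∀ x, mk (v' x) ∈ σ (u'.lab x)) ∧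
      mk (u'.lexSum v') = mk (u.lexSum v) := by
  obtain ⟨e, he⟩ := h
  refine ⟨v ∘ e.symm, fun x => ?_, mk_lexSum_congr e.symm fun _ => rfl⟩
  rw [← e.apply_symm_apply x, he, e.apply_symm_apply]
  exact hv (e.symm x)

/-- Substitution of the languages `σ a` for the letters `a` of a pomset: `U.subst σ` consists of
the pomsets that arise from `U` by replacing every point, labelled `a` say, by some pomset of
`σ a`. For a map `r` from letters to terms, the case `σ a = ⟦r a⟧` is the extension of `r` to
pomsets. -/
def subst (σ : A → Lang B) : Pomset A → Lang B :=
  Quotient.lift (fun u => {X | ∃ v : u.carrier → LPoset B,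
      (∀ x, mk (v x) ∈ σ (u.lab x)) ∧ mk (u.lexSum v) = X}) fun u u' h => by
    refine Set.Subset.antisymm ?_ ?_
    · rintro _ ⟨v, hv, rfl⟩
      exact exists_mk_lexSum_eq h hv
    · rintro _ ⟨v, hv, rfl⟩
      exact exists_mk_lexSum_eq (Setoid.symm h) hv

variable (σ : A → Lang B)

theorem subst_empty : (empty A).subst σ = {empty B} := by
  ext X
  constructor
  · rintro ⟨v, -, rfl⟩
    exact mk_lexSum_emptyL v
  · rintro rfl
    exact ⟨fun x => x.elim0, fun x => x.elim0, mk_lexSum_emptyL _⟩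

theorem subst_single (a : A) : (single a).subst σ = σ a := by
  ext X
  constructor
  · rintro ⟨v, hv, rfl⟩
    exact mk_lexSum_singleL a v ▸ hv PUnit.unit
  · induction X using ind with | _ x
    exact fun hx => ⟨fun _ => x, fun _ => hx, mk_lexSum_singleL a _⟩

theorem subst_seq (U V : Pomset A) :
    (U.seq V).subst σ = Lang.seq (U.subst σ) (V.subst σ) := by
  induction U using ind with | _ u
  induction V using ind with | _ v
  ext X
  constructor
  · rintro ⟨w, hw, rfl⟩
    exact ⟨_, ⟨w ∘ Sum.inlₗ, fun x => hw (Sum.inlₗ x), rfl⟩,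
      _, ⟨w ∘ Sum.inrₗ, fun x => hw (Sum.inrₗ x), rfl⟩, mk_lexSum_seqL u v w⟩
  · rintro ⟨_, ⟨w, hw, rfl⟩, _, ⟨w', hw', rfl⟩, rfl⟩
    exact ⟨Sum.elim w w', Sum.forall.2 ⟨hw, hw'⟩, mk_lexSum_seqL u v _⟩

theorem subst_par (U V : Pomset A) :
    (U.par V).subst σ = Lang.par (U.subst σ) (V.subst σ) := by
  induction U using ind with | _ u
  induction V using ind with | _ v
  ext X
  constructor
  · rintro ⟨w, hw, rfl⟩
    exact ⟨_, ⟨w ∘ Sum.inl, fun x => hw (Sum.inl x), rfl⟩,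
      _, ⟨w ∘ Sum.inr, fun x => hw (Sum.inr x), rfl⟩, mk_lexSum_parL u v w⟩
  · rintro ⟨_, ⟨w, hw, rfl⟩, _, ⟨w', hw', rfl⟩, rfl⟩
    exact ⟨Sum.elim w w', Sum.forall.2 ⟨hw, hw'⟩, mk_lexSum_parL u v _⟩

variable {σ}

theorem IsSP.subst_subset_SPset {U : Pomset A} (hU : U.IsSP) (hσ : ∀ a, σ a ⊆ SPset B) :
    U.subst σ ⊆ SPset B := by
  induction hU with
  | empty => exact (subst_empty σ).trans_subset (Set.singleton_subset_iff.2 .empty)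
  | single a => exact (subst_single σ a).trans_subset (hσ a)
  | seq _ _ ihU ihV => exact (subst_seq σ _ _).trans_subset (Lang.seq_subset_SPset ihU ihV)
  | par _ _ ihU ihV => exact (subst_par σ _ _).trans_subset (Lang.par_subset_SPset ihU ihV)

end Pomset

namespace Lang

variable {A B : Type}

/-- The union of the substitutions of `σ` in the pomsets of `L`. -/
def subst (σ : A → Lang B) (L : Lang A) : Lang B := ⋃ U ∈ L, U.subst σ

variable {σ : A → Lang B}

theorem subst_subset_iff {L : Lang A} {M : Lang B} :
    L.subst σ ⊆ M ↔ ∀ U ∈ L, U.subst σ ⊆ M :=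
  Set.iUnion₂_subset_iff

variable (σ)

theorem subst_empty : subst σ ∅ = ∅ := Set.biUnion_empty _

theorem subst_singleton (U : Pomset A) : subst σ {U} = U.subst σ := Set.biUnion_singleton _ _

theorem subst_union (L K : Lang A) : (L ∪ K).subst σ = L.subst σ ∪ K.subst σ :=
  Set.biUnion_union _ _ _

theorem subst_iUnion (L : ℕ → Lang A) : subst σ (⋃ n, L n) = ⋃ n, (L n).subst σ :=
  Set.biUnion_iUnion _ _

theorem subst_seq (L K : Lang A) : (seq L K).subst σ = seq (L.subst σ) (K.subst σ) := by
  rw [subst, subst, subst, seq_eq_image2, seq_eq_image2, Set.image2_iUnion₂_left]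
  simp only [Set.biUnion_image2, Set.image2_iUnion₂_right, Pomset.subst_seq, seq_eq_image2]

theorem subst_par (L K : Lang A) : (par L K).subst σ = par (L.subst σ) (K.subst σ) := by
  rw [subst, subst, subst, par_eq_image2, par_eq_image2, Set.image2_iUnion₂_left]
  simp only [Set.biUnion_image2, Set.image2_iUnion₂_right, Pomset.subst_par, par_eq_image2]

theorem subst_pow (L : Lang A) (n : ℕ) : (L.pow n).subst σ = (L.subst σ).pow n := by
  induction n with
  | zero => exact (subst_singleton σ _).trans (Pomset.subst_empty σ)
  | succ n ih => exact (subst_seq σ _ _).trans (congrArg (seq · (L.subst σ)) ih)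

theorem subst_star (L : Lang A) : L.star.subst σ = (L.subst σ).star :=
  (subst_iUnion σ L.pow).trans (Set.iUnion_congr (subst_pow σ L))

end Lang

theorem lang_rTerm {A : Type} (r : A → Term A) (e : Term A) :
    (rTerm r e).lang = e.lang.subst fun a => (r a).lang := by
  induction e with
  | zero => exact (Lang.subst_empty _).symm
  | one => exact ((Lang.subst_singleton _ _).trans (Pomset.subst_empty _)).symm
  | var a =>
    exact ((Lang.subst_singleton _ _).trans (Pomset.subst_single (fun a => (r a).lang) a)).symm
  | add e f ihe ihf => exact (congrArg₂ _ ihe ihf).trans (Lang.subst_union _ _ _).symm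
  | seq e f ihe ihf => exact (congrArg₂ _ ihe ihf).trans (Lang.subst_seq _ _ _).symm
  | par e f ihe ihf => exact (congrArg₂ _ ihe ihf).trans (Lang.subst_par _ _ _).symm
  | star e ihe => exact (congrArg _ ihe).trans (Lang.subst_star _ _).symm

/-! ### Substitution and closure -/

section SubstClosure

variable {A B : Type} {σ : A → Lang B} {H : HypSet A} {H' : HypSet B}

theorem GenCtx.subst_img_subset_cl {C : Pomset (Option A)} {L K : Lang A} (hC : GenCtx C)
    (hσ : ∀ a, σ a ⊆ SPset B) (h : L.subst σ ⊆ cl H' (K.subst σ)) :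
    (Ctx.img C L).subst σ ⊆ cl H' ((Ctx.img C K).subst σ) := by
  induction hC with
  | star => simpa only [Ctx.img_star] using h
  | seqL hU hC ih =>
    simp only [Ctx.img_map_some_seq hC.isSPCtx.1, Lang.subst_seq, Lang.subst_singleton]
    exact (Lang.seq_mono subset_rfl ih).trans (seq_cl_subset (hU.subst_subset_SPset hσ))
  | seqR hC hV ih =>
    simp only [Ctx.img_seq_map_some hC.isSPCtx.1, Lang.subst_seq, Lang.subst_singleton]
    exact (Lang.seq_mono ih subset_rfl).trans (cl_seq_subset (hV.subst_subset_SPset hσ))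
  | par hU hC ih =>
    simp only [Ctx.img_map_some_par hC.isSPCtx.1, Lang.subst_par, Lang.subst_singleton]
    exact (Lang.par_mono subset_rfl ih).trans (par_cl_subset (hU.subst_subset_SPset hσ))

theorem subst_cl_subset (hσ : ∀ a, σ a ⊆ SPset B)
    (hhyps : ∀ p ∈ H, p.1.lang.subst σ ⊆ cl H' (p.2.lang.subst σ)) (L : Lang A) :
    (cl H L).subst σ ⊆ cl H' (L.subst σ) := by
  rw [Lang.subst_subset_iff]
  suffices cl H L ⊆ {U | U.subst σ ⊆ cl H' (L.subst σ)} from this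
  refine cl_subset (Lang.subst_subset_iff.1 (subset_cl H' (L.subst σ)))
    fun e f hef C hC hf U hU => ?_
  have himg : (Ctx.img C f.lang).subst σ ⊆ cl H' (L.subst σ) :=
    Lang.subst_subset_iff.2 fun W ⟨V, hV, hW⟩ => hW ▸ hf V hV
  calc (C.ins U).subst σ ⊆ (Ctx.img C e.lang).subst σ :=
        Lang.subst_subset_iff.1 subset_rfl _ ⟨U, hU, rfl⟩
    _ ⊆ cl H' ((Ctx.img C f.lang).subst σ) := hC.genCtx.subst_img_subset_cl hσ (hhyps _ hef)
    _ ⊆ cl H' (L.subst σ) := cl_subset_cl_iff.2 himg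

end SubstClosure

section Reification

variable {A : Type} {H H' : HypSet A} {r : A → Term A}

theorem lang_rTerm_subset_cl (hhyps : ∀ p ∈ H, LeH H' (rTerm r p.1) (rTerm r p.2)) {e f : Term A}
    (h : e.lang ⊆ cl H f.lang) : (rTerm r e).lang ⊆ cl H' (rTerm r f).lang := by
  simp only [lang_rTerm]
  refine (Set.biUnion_mono h fun _ _ => subset_rfl).trans
    (subst_cl_subset (fun a => (r a).lang_subset_SPset) (fun p hp => ?_) f.lang)
  simpa only [lang_rTerm] using (hhyps p hp).lang_subset_cl

theorem congH_rTerm (hequiv : ∀ a, CongH H (r a) (.var a)) (e : Term A) :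
    CongH H e (rTerm r e) := by
  induction e with
  | zero => exact .refl _
  | one => exact .refl _
  | var a => exact (hequiv a).symm
  | add _ _ ihe ihf => exact ihe.addCong ihf
  | seq _ _ ihe ihf => exact ihe.seqCong ihf
  | par _ _ ihe ihf => exact ihe.parCong ihf
  | star _ ihe => exact ihe.starCong

theorem reification_to_reduction_general (himp : Implies H H')
    (hequiv : ∀ a, CongH H (r a) (.var a))
    (hhyps : ∀ p ∈ H, LeH H' (rTerm r p.1) (rTerm r p.2)) : IsReduction H H' (rTerm r) where
  implies := himp
  equiv := congH_rTerm hequiv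
  reflect e f h := by
    rw [cl_eq_cl_iff] at h ⊢
    exact ⟨lang_rTerm_subset_cl hhyps h.1, lang_rTerm_subset_cl hhyps h.2⟩

end Reification

/-- **Reification yields reduction**: if `H` implies `H'` and `r` is a reification from
`H` to `H'`, then the homomorphic extension of `r` to terms is a reduction. -/
theorem reification_to_reduction (A : Type) (Γ : Set A) (H H' : HypSet A)
    (r : A → Term A) (himp : Implies H H') (hr : IsReification Γ H H' r) :
    IsReduction H H' (rTerm r) :=
  reification_to_reduction_general himp hr.equiv hr.hyps

end CKAH
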